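/- (Theorem 1, first part) The bounded counter problem for nondeterministic counter machines is Σ⁰₁-complete: the set {(M, β) : M a nondeterministic counter machine (with at least 2 counters), β ∈ ℕ, and counter v₀ exceeds β at some point of some computation of M} is recursively enumerable, and every recursively enumerable subset of ℕ many-one reduces to it. -/

import Mathlib

/-!
The bounded counter problem is recursively enumerable because a computation is determined by the
sequence of its nondeterministic choices. The function `simRun` follows such a sequence and is
primitive recursive, so by `mem_bcset_iff` and `primrecRel_bcWitness` membership in `BCset` is the
existence of a witness (a coded choice sequence) for a primitive recursive relation, and an
unbounded search for a witness has `BCset` as its domain.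

For hardness, a Σ⁰₁ set `A` has the form `n ∈ A ↔ ∃ k, 0 < g n k` with `g` primitive recursive
(bounded evaluation of a code of the partial function with domain `A`). Regular programs over
counters, built from increments, decrements, zero tests, composition and iteration, compute every
primitive recursive function (`Prog.able_of_primrec`), each in a deterministic way: the zero test
at the exit of a loop discards all runs that leave it too early. A regular program compiles to
machine code that never touches counter `0`, and whose complete runs are exactly those of the
program (`reach_of_rel`, `rel_of_ov`).

The machine for `n` guesses `x` and `k`, checks `0 < g x k`, subtracts `n` from `x`, tests the
result for zero, and only then increments counter `0`. Hence `v₀` exceeds `0` in some computation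
iff `n ∈ A`. As `x` is guessed, `g` is compiled once and for all: only the number of decrements
and the address in the zero test depend on `n`, which makes the reduction primitive recursive.
-/

/-- `A ⊆ ℕ` is Σ⁰₁ (recursively enumerable): `A` is the domain of a partial
computable function. -/
def Sigma01 (A : Set ℕ) : Prop :=
  ∃ f : ℕ →. ℕ, Nat.Partrec f ∧ ∀ n, n ∈ A ↔ (f n).Dom

/-- `A ⊆ ℕ` is Π⁰₁: its complement is Σ⁰₁. -/
def Pi01 (A : Set ℕ) : Prop := Sigma01 Aᶜ

/-- `A ⊆ ℕ` is Σ⁰₂: `n ∈ A ↔ ∃ a, ∀ b, R n a b` for a decidable relation `R`. -/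
def Sigma02 (A : Set ℕ) : Prop :=
  ∃ R : ℕ → ℕ → ℕ → Bool, Computable (fun p : ℕ × ℕ × ℕ => R p.1 p.2.1 p.2.2) ∧
    ∀ n, n ∈ A ↔ ∃ a, ∀ b, R n a b = true

/-- `A` many-one reduces to `B`: there is a total computable `f` with
`n ∈ A ↔ f n ∈ B` for all `n`. -/
def ManyOneRed (A B : Set ℕ) : Prop :=
  ∃ f : ℕ → ℕ, Computable f ∧ ∀ n, n ∈ A ↔ f n ∈ B
/-- Instructions of nondeterministic counter machines. -/
inductive Instr where
  | halt : Instr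
  | inc : ℕ → Instr
  | dec : ℕ → Instr
  | branch : ℕ → ℕ → ℕ → Instr
deriving DecidableEq

/-- A nondeterministic counter machine: a number of counters together with a
finite list of instructions `ℓ₀, …, ℓ_m`. -/
structure CM where
  numCounters : ℕ
  prog : List Instr

/-- Counters mentioned by an instruction. -/
def Instr.counters : Instr → List ℕ
  | .halt => []
  | .inc k => [k]
  | .dec k => [k]
  | .branch k _ _ => [k]

/-- Well-formedness: instructions only mention the machine's counters, and the
instruction `halt` occurs exactly once in the program. -/
def CM.WellFormed (M : CM) : Prop :=
  (∀ i ∈ M.prog, ∀ k ∈ i.counters, k < M.numCounters) ∧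
    M.prog.count Instr.halt = 1

/-- A configuration: current location and counter contents. -/
structure Config where
  loc : ℕ
  cnt : ℕ → ℕ

/-- The initial configuration: location `ℓ₀`, all counters equal to `0`. -/
def initConfig : Config := ⟨0, fun _ => 0⟩

/-- One nondeterministic computation step. `halt` has no successor, and
decrementing a zero counter is undefined (no successor). -/
def Step (M : CM) (c c' : Config) : Prop :=
  match M.prog[c.loc]? with
  | none => False
  | some .halt => False
  | some (.inc k) => c' = ⟨c.loc + 1, Function.update c.cnt k (c.cnt k + 1)⟩
  | some (.dec k) => 0 < c.cnt k ∧ c' = ⟨c.loc + 1, Function.update c.cnt k (c.cnt k - 1)⟩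
  | some (.branch k i j) =>
      (c.cnt k ≠ 0 ∧ (c' = ⟨i, c.cnt⟩ ∨ c' = ⟨j, c.cnt⟩)) ∨
        (c.cnt k = 0 ∧ c' = ⟨c.loc + 1, c.cnt⟩)

/-- `c` occurs at some point of some computation of `M`. -/
def Reaches (M : CM) (c : Config) : Prop :=
  Relation.ReflTransGen (Step M) initConfig c

/-- Counter `v₀` exceeds `β` at some point of some computation of `M`. -/
def Overflows (M : CM) (β : ℕ) : Prop := ∃ c, Reaches M c ∧ β < c.cnt 0

/-- Some computation of `M` reaches the `halt` instruction. -/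
def Halts (M : CM) : Prop := ∃ c, Reaches M c ∧ M.prog[c.loc]? = some Instr.halt

/-- An infinite computation of `M`. -/
def IsInfRun (M : CM) (ρ : ℕ → Config) : Prop :=
  ρ 0 = initConfig ∧ ∀ k, Step M (ρ k) (ρ (k + 1))

/-- A (finite or infinite) computation of `M`, presented as an infinite
sequence that stutters forever once no step is possible. -/
def IsComp (M : CM) (ρ : ℕ → Config) : Prop :=
  ρ 0 = initConfig ∧
    ∀ k, Step M (ρ k) (ρ (k + 1)) ∨ ((¬ ∃ c, Step M (ρ k) c) ∧ ρ (k + 1) = ρ k)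

/-- Effective code of an instruction. -/
def Instr.code : Instr → ℕ
  | .halt => Nat.pair 0 0
  | .inc k => Nat.pair 1 k
  | .dec k => Nat.pair 2 k
  | .branch k i j => Nat.pair 3 (Nat.pair k (Nat.pair i j))

/-- Effective code of a list of naturals. -/
def listCode : List ℕ → ℕ
  | [] => 0
  | a :: l => Nat.pair a (listCode l) + 1

/-- A fixed effective encoding of counter machines as natural numbers. -/
def CM.code (M : CM) : ℕ :=
  Nat.pair M.numCounters (listCode (M.prog.map Instr.code))

/-- The bounded counter problem, as a set of codes of pairs `(M, β)` with `M` a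
well-formed machine with at least 2 counters such that `v₀` exceeds `β` at some
point of some computation of `M`. -/
def BCset : Set ℕ :=
  {n | ∃ (M : CM) (β : ℕ), n = Nat.pair M.code β ∧ M.WellFormed ∧
    2 ≤ M.numCounters ∧ Overflows M β}

/-! ### A nondeterministic imperative language and its compilation -/

/-- Regular programs over counters. Nondeterminism comes from `star`; `dec` and `zero` act as
guards, since they block on a zero, respectively nonzero, counter. -/
inductive Prog where
  | skip : Prog
  | inc : ℕ → Prog
  | dec : ℕ → Prog
  | zero : ℕ → Prog
  | seq : Prog → Prog → Prog
  | star : Prog → Prog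

namespace Prog

/-- The input-output relation of a program. -/
def rel : Prog → (ℕ → ℕ) → (ℕ → ℕ) → Prop
  | skip, σ, τ => τ = σ
  | inc k, σ, τ => τ = Function.update σ k (σ k + 1)
  | dec k, σ, τ => 0 < σ k ∧ τ = Function.update σ k (σ k - 1)
  | zero k, σ, τ => σ k = 0 ∧ τ = σ
  | seq p q, σ, τ => ∃ ρ, p.rel σ ρ ∧ q.rel ρ τ
  | star p, σ, τ => Relation.ReflTransGen p.rel σ τ

/-- Number of machine instructions of the compiled program. -/
def len : Prog → ℕ
  | skip => 0
  | inc _ => 1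
  | dec _ => 1
  | zero _ => 1
  | seq p q => p.len + q.len
  | star p => p.len + 2

/-- Machine code of a program, to be placed at address `a`. Program counter `k` is machine
counter `k + 2`: counter `0` is left for the overflow, and counter `1` is a constant `1`, branching
on which is an unconditional (nondeterministic) jump. A failed `zero` test loops forever. -/
def compile : Prog → ℕ → List Instr
  | skip, _ => []
  | inc k, _ => [.inc (k + 2)]
  | dec k, _ => [.dec (k + 2)]
  | zero k, a => [.branch (k + 2) a a]
  | seq p q, a => p.compile a ++ q.compile (a + p.len)
  | star p, a =>
      .branch 1 (a + 1) (a + p.len + 2) :: (p.compile (a + 1) ++ [.branch 1 a a])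

lemma length_compile (p : Prog) (a : ℕ) : (p.compile a).length = p.len := by
  induction p generalizing a with
  | seq p q hp hq => simp [compile, len, hp, hq]
  | star p hp => simp [compile, len, hp]
  | _ => simp [compile, len]

lemma halt_notMem_compile (p : Prog) (a : ℕ) : Instr.halt ∉ p.compile a := by
  induction p generalizing a with
  | seq p q hp hq => simp [compile, hp, hq]
  | star p hp => simp [compile, hp]
  | _ => simp [compile]

end Prog

/-- The machine counters that represent the program state `σ`. -/
def emb (σ : ℕ → ℕ) : ℕ → ℕ
  | 0 => 0
  | 1 => 1
  | k + 2 => σ k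

lemma update_emb (σ : ℕ → ℕ) (k x : ℕ) :
    Function.update (emb σ) (k + 2) x = emb (Function.update σ k x) := by
  funext j
  match j with
  | 0 => simp [emb]
  | 1 => simp [emb]
  | j + 2 => simp [emb, Function.update_apply]

/-- The instruction list `l` occurs in the program of `M` at address `a`. -/
def Fits (M : CM) (a : ℕ) (l : List Instr) : Prop :=
  ∀ i x, l[i]? = some x → M.prog[a + i]? = some x

lemma Fits.cons {M : CM} {a : ℕ} {x : Instr} {l : List Instr} (h : Fits M a (x :: l)) :
    M.prog[a]? = some x ∧ Fits M (a + 1) l := by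
  refine ⟨by simpa using h 0 x (by simp), fun i y hy => ?_⟩
  have := h (i + 1) y (by simpa using hy)
  rwa [show a + 1 + i = a + (i + 1) by omega]

lemma Fits.append {M : CM} {a : ℕ} {l₁ l₂ : List Instr} (h : Fits M a (l₁ ++ l₂)) :
    Fits M a l₁ ∧ Fits M (a + l₁.length) l₂ := by
  refine ⟨fun i x hx => h i x ?_, fun i x hx => ?_⟩
  · rw [List.getElem?_append_left]
    · exact hx
    · exact (List.getElem?_eq_some_iff.1 hx).1
  · rw [Nat.add_assoc]
    apply h
    rw [List.getElem?_append_right (by omega)]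
    simpa using hx

lemma step_inc {M : CM} {a k : ℕ} {v : ℕ → ℕ} {c : Config} (h : M.prog[a]? = some (.inc k)) :
    Step M ⟨a, v⟩ c ↔ c = ⟨a + 1, Function.update v k (v k + 1)⟩ := by
  simp [Step, h]

lemma step_dec {M : CM} {a k : ℕ} {v : ℕ → ℕ} {c : Config} (h : M.prog[a]? = some (.dec k)) :
    Step M ⟨a, v⟩ c ↔ 0 < v k ∧ c = ⟨a + 1, Function.update v k (v k - 1)⟩ := by
  simp [Step, h]

lemma step_branch {M : CM} {a k i j : ℕ} {v : ℕ → ℕ} {c : Config}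
    (h : M.prog[a]? = some (.branch k i j)) :
    Step M ⟨a, v⟩ c ↔ (v k ≠ 0 ∧ (c = ⟨i, v⟩ ∨ c = ⟨j, v⟩)) ∨ (v k = 0 ∧ c = ⟨a + 1, v⟩) := by
  simp [Step, h]

/-- Every run of a program is realised by its machine code. -/
lemma reach_of_rel {M : CM} (p : Prog) {a : ℕ} {σ τ : ℕ → ℕ} (hf : Fits M a (p.compile a))
    (h : p.rel σ τ) : Relation.ReflTransGen (Step M) ⟨a, emb σ⟩ ⟨a + p.len, emb τ⟩ := by
  induction p generalizing a σ τ with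
  | skip => cases h; exact .refl
  | inc k =>
    refine .single ((step_inc hf.cons.1).2 ?_)
    cases h
    rw [update_emb]
    rfl
  | dec k =>
    refine .single ((step_dec hf.cons.1).2 ?_)
    obtain ⟨h, rfl⟩ := h
    rw [update_emb]
    exact ⟨h, rfl⟩
  | zero k =>
    refine .single ((step_branch hf.cons.1).2 ?_)
    obtain ⟨h, rfl⟩ := h
    exact .inr ⟨h, rfl⟩
  | seq p q hp hq =>
    obtain ⟨ρ, h₁, h₂⟩ := h
    obtain ⟨f₁, f₂⟩ := hf.append
    rw [p.length_compile] at f₂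
    have := hq f₂ h₂
    rw [Nat.add_assoc] at this
    exact (hp f₁ h₁).trans this
  | star p hp =>
    obtain ⟨f₀, f⟩ := hf.cons
    obtain ⟨f₁, f₂⟩ := f.append
    rw [p.length_compile] at f₂
    replace f₂ := f₂.cons.1
    have loop : ∀ {σ τ}, p.rel σ τ →
        Relation.ReflTransGen (Step M) ⟨a, emb σ⟩ ⟨a, emb τ⟩ := by
      intro σ τ h
      refine .head ((step_branch f₀).2 (.inl ⟨one_ne_zero, .inl rfl⟩)) ((hp f₁ h).tail ?_)
      exact (step_branch f₂).2 (.inl ⟨one_ne_zero, .inl rfl⟩)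
    have many : Relation.ReflTransGen (Step M) ⟨a, emb σ⟩ ⟨a, emb τ⟩ := by
      change Relation.ReflTransGen p.rel σ τ at h
      induction h with
      | refl => exact .refl
      | tail _ h ih => exact ih.trans (loop h)
    exact many.tail ((step_branch f₀).2 (.inl ⟨one_ne_zero, .inr rfl⟩))

/-- Some run of `n` steps from `c` makes counter `0` positive. -/
def Ov (M : CM) : ℕ → Config → Prop
  | 0, c => 0 < c.cnt 0
  | n + 1, c => ∃ c', Step M c c' ∧ Ov M n c'

/-- Since compiled code leaves counter `0` at zero, an overflow can only happen after leaving the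
code at its end, in a state allowed by `rel`. The step counts provide the induction for `star`. -/
lemma rel_of_ov {M : CM} (p : Prog) {a n : ℕ} {σ : ℕ → ℕ} (hf : Fits M a (p.compile a))
    (h : Ov M n ⟨a, emb σ⟩) : ∃ τ, p.rel σ τ ∧ ∃ m ≤ n, Ov M m ⟨a + p.len, emb τ⟩ := by
  induction p generalizing a n σ with
  | skip => exact ⟨σ, rfl, n, le_rfl, h⟩
  | inc k =>
    match n, h with
    | n + 1, ⟨c, hc, h⟩ =>
      rw [step_inc hf.cons.1, update_emb] at hc
      cases hc
      exact ⟨_, rfl, n, by omega, h⟩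
  | dec k =>
    match n, h with
    | n + 1, ⟨c, hc, h⟩ =>
      rw [step_dec hf.cons.1, update_emb] at hc
      obtain ⟨hk, rfl⟩ := hc
      exact ⟨_, ⟨hk, rfl⟩, n, by omega, h⟩
  | zero k =>
    induction n with
    | zero => exact absurd h (lt_irrefl 0)
    | succ n ih =>
      obtain ⟨c, hc, h⟩ := h
      rw [step_branch hf.cons.1] at hc
      rcases hc with ⟨_, hc⟩ | ⟨hk, rfl⟩
      · obtain rfl : c = ⟨a, emb σ⟩ := by simpa using hc
        obtain ⟨τ, h₁, m, hm, h₂⟩ := ih h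
        exact ⟨τ, h₁, m, by omega, h₂⟩
      · exact ⟨σ, ⟨hk, rfl⟩, n, by omega, h⟩
  | seq p q hp hq =>
    obtain ⟨f₁, f₂⟩ := hf.append
    rw [p.length_compile] at f₂
    obtain ⟨ρ, h₁, m, hm, h⟩ := hp f₁ h
    obtain ⟨τ, h₂, m', hm', h⟩ := hq f₂ h
    exact ⟨τ, ⟨ρ, h₁, h₂⟩, m', by omega, by rwa [Nat.add_assoc] at h⟩
  | star p hp =>
    obtain ⟨f₀, f⟩ := hf.cons
    obtain ⟨f₁, f₂⟩ := f.append
    rw [p.length_compile] at f₂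
    replace f₂ := f₂.cons.1
    induction n using Nat.strong_induction_on generalizing σ with
    | _ n ih =>
      match n, h with
      | n + 1, ⟨c, hc, h⟩ =>
        rw [step_branch f₀] at hc
        rcases hc with ⟨_, rfl | rfl⟩ | ⟨h0, _⟩
        · obtain ⟨ρ, h₁, m, hm, h⟩ := hp f₁ h
          match m, h with
          | m + 1, ⟨c, hc, h⟩ =>
            rw [step_branch f₂] at hc
            rcases hc with ⟨_, hc⟩ | ⟨h0, _⟩
            · obtain rfl : c = ⟨a, emb ρ⟩ := by simpa using hc
              obtain ⟨τ, h₂, m', hm', h⟩ := ih m (by omega) h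
              exact ⟨τ, Relation.ReflTransGen.head h₁ h₂, m', by omega, h⟩
            · exact absurd h0 one_ne_zero
        · exact ⟨σ, Relation.ReflTransGen.refl, n, by omega, h⟩
        · exact absurd h0 one_ne_zero

/-! ### Primitive recursive functions as programs -/

namespace Prog

/-- From the state `σ`, the only possible result of `p` is `τ`, and it is possible. -/
def Det (p : Prog) (σ τ : ℕ → ℕ) : Prop := ∀ ρ, p.rel σ ρ ↔ ρ = τ

lemma Det.seq {p q : Prog} {σ ρ τ : ℕ → ℕ} (hp : Det p σ ρ) (hq : Det q ρ τ) :
    Det (.seq p q) σ τ := by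
  intro τ'
  simp only [rel]
  constructor
  · rintro ⟨ρ', h₁, h₂⟩
    rw [(hp ρ').1 h₁] at h₂
    exact (hq τ').1 h₂
  · rintro rfl
    exact ⟨ρ, (hp ρ).2 rfl, (hq τ').2 rfl⟩

lemma det_skip (σ : ℕ → ℕ) : Det skip σ σ := fun _ => Iff.rfl

lemma det_inc (k : ℕ) (σ : ℕ → ℕ) : Det (inc k) σ (Function.update σ k (σ k + 1)) :=
  fun _ => Iff.rfl

/-- Repeat: while counter `k` is nonzero, decrement it and execute `p`. -/
def loop (k : ℕ) (p : Prog) : Prog := seq (star (seq (dec k) p)) (zero k)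

/-- A loop passing through the states `S 0, S 1, …` while its counter goes down from `m` to `0`
ends in `S m`. -/
lemma det_loop {k m : ℕ} {p : Prog} {σ : ℕ → ℕ} (S : ℕ → ℕ → ℕ) (h0 : S 0 = σ)
    (hk : ∀ i ≤ m, S i k = m - i)
    (hS : ∀ i < m, Det p (Function.update (S i) k (m - i - 1)) (S (i + 1))) :
    Det (loop k p) σ (S m) := by
  have hbody : ∀ i ≤ m, ∀ ρ, (seq (dec k) p).rel (S i) ρ ↔ i < m ∧ ρ = S (i + 1) := by
    intro i hi ρ
    constructor
    · rintro ⟨ρ', ⟨hpos, rfl⟩, h⟩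
      rw [hk i hi] at h hpos
      have : i < m := by omega
      exact ⟨this, (hS i this ρ).1 h⟩
    · rintro ⟨hlt, rfl⟩
      exact ⟨_, ⟨by rw [hk i hi]; omega, rfl⟩, by rw [hk i hi]; exact (hS i hlt _).2 rfl⟩
  subst h0
  intro ρ
  constructor
  · rintro ⟨ρ', h, hz, rfl⟩
    have : ∃ i ≤ m, ρ = S i := by
      change Relation.ReflTransGen _ _ _ at h
      clear hz
      induction h with
      | refl => exact ⟨0, Nat.zero_le _, rfl⟩
      | tail _ h ih =>
        obtain ⟨i, hi, rfl⟩ := ih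
        obtain ⟨hlt, rfl⟩ := (hbody i hi _).1 h
        exact ⟨i + 1, hlt, rfl⟩
    obtain ⟨i, hi, rfl⟩ := this
    have := hk i hi
    obtain rfl : i = m := by omega
    rfl
  · rintro rfl
    have : ∀ i ≤ m, Relation.ReflTransGen (seq (dec k) p).rel (S 0) (S i) := by
      intro i
      induction i with
      | zero => exact fun _ => .refl
      | succ i ih => exact fun hi => (ih (by omega)).tail ((hbody i (by omega) _).2 ⟨hi, rfl⟩)
    exact ⟨_, this m le_rfl, by simp [hk m le_rfl], rfl⟩

lemma det_clear (k : ℕ) (σ : ℕ → ℕ) : Det (loop k skip) σ (Function.update σ k 0) := by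
  have := det_loop (k := k) (m := σ k) (p := skip) (σ := σ)
    (fun i => Function.update σ k (σ k - i)) (by simp) (by simp)
    (fun i hi => by simpa [Nat.sub_sub] using det_skip _)
  simpa using this

/-- Moving the content of counter `k` into counter `o`, by addition. -/
lemma det_move {k o : ℕ} (hko : k ≠ o) (σ : ℕ → ℕ) :
    Det (loop k (inc o)) σ (Function.update (Function.update σ k 0) o (σ o + σ k)) := by
  have := det_loop (k := k) (m := σ k) (p := inc o) (σ := σ)
    (fun i => Function.update (Function.update σ k (σ k - i)) o (σ o + i)) (by simp)
    (by simp [hko]) (fun i hi => by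
      convert det_inc _ _ using 1
      funext x
      simp only [Function.update_apply]
      grind)
  simpa using this

/-- Adding the content of counter `k` to counter `o`, through the empty counter `t`. -/
def copy (k o t : ℕ) : Prog := seq (loop k (seq (inc t) (inc o))) (loop t (inc k))

lemma det_copy {k o t : ℕ} (hko : k ≠ o) (hkt : k ≠ t) (hot : o ≠ t) {σ : ℕ → ℕ} (ht : σ t = 0) :
    Det (copy k o t) σ (Function.update σ o (σ o + σ k)) := by
  have := det_loop (k := k) (m := σ k) (p := seq (inc t) (inc o)) (σ := σ)
    (fun i => Function.update (Function.update (Function.update σ k (σ k - i)) t i)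
      o (σ o + i)) (by funext x; simp only [Function.update_apply]; grind)
    (by intro i _; simp only [Function.update_apply]; grind) (fun i hi => by
      convert (det_inc _ _).seq (det_inc _ _) using 1
      funext x
      simp only [Function.update_apply]
      grind)
  rw [copy]
  convert this.seq (det_move hkt.symm _) using 1
  funext x
  simp only [Function.update_apply]
  grind

/-- Clearing the counters `b, …, b + j - 1`. -/
lemma exists_clear (b j : ℕ) : ∃ p : Prog, ∀ σ : ℕ → ℕ,
    Det p σ (fun x => if b ≤ x ∧ x < b + j then 0 else σ x) := by
  induction j with
  | zero =>
    refine ⟨skip, fun σ => ?_⟩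
    convert det_skip σ using 1
    funext x
    grind
  | succ j ih =>
    obtain ⟨p, hp⟩ := ih
    refine ⟨seq p (loop (b + j) skip), fun σ => ?_⟩
    convert (hp σ).seq (det_clear (b + j) _) using 1
    funext x
    simp only [Function.update_apply]
    grind

/-- `f` is programmable: for any choice of input counters and of a different output counter, all
below `b`, there is a program that adds the value of `f` to the output counter and changes nothing
else, provided that the counters from `b` on are empty. -/
def Able {n : ℕ} (f : List.Vector ℕ n → ℕ) : Prop :=
  ∀ (ins : Fin n → ℕ) (o b : ℕ), (∀ i, ins i < b) → o < b → (∀ i, ins i ≠ o) →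
    ∃ p : Prog, ∀ σ : ℕ → ℕ, (∀ x, b ≤ x → σ x = 0) →
      Det p σ (Function.update σ o (σ o + f (List.Vector.ofFn fun i => σ (ins i))))

lemma able_get {n : ℕ} (i : Fin n) : Able (fun v : List.Vector ℕ n => v.get i) := by
  intro ins o b hins ho hne
  refine ⟨copy (ins i) o b, fun σ hσ => ?_⟩
  have := det_copy (hne i) (hins i).ne ho.ne (hσ b le_rfl)
  simpa using this

lemma able_succ : Able (fun v : List.Vector ℕ 1 => Nat.succ v.head) := by
  intro ins o b hins ho hne
  refine ⟨seq (copy (ins 0) o b) (inc o), fun σ hσ => ?_⟩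
  have := (det_copy (hne 0) (hins 0).ne ho.ne (hσ b le_rfl)).seq (det_inc o _)
  convert this using 1
  funext x
  by_cases hx : x = o <;> simp [hx, Nat.add_assoc]

lemma able_zero : Able (fun _ : List.Vector ℕ 0 => 0) := by
  intro ins o b hins ho hne
  exact ⟨skip, fun σ hσ => by simpa using det_skip σ⟩

/-- Evaluation of the first `j` inner functions of a composition into counters `b, …, b + j - 1`,
with scratch counters from `b + n` on. -/
lemma exists_inner {m n : ℕ} (g : Fin n → List.Vector ℕ m → ℕ) (hg : ∀ i, Able (g i))
    (ins : Fin m → ℕ) (b : ℕ) (hins : ∀ i, ins i < b) (j : ℕ) (hj : j ≤ n) :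
    ∃ p : Prog, ∀ σ : ℕ → ℕ, (∀ x, b ≤ x → σ x = 0) →
      Det p σ (fun x => if h : b ≤ x ∧ x < b + j then
        g ⟨x - b, by omega⟩ (List.Vector.ofFn fun i => σ (ins i)) else σ x) := by
  induction j with
  | zero =>
    refine ⟨skip, fun σ _ => ?_⟩
    convert det_skip σ using 1
    funext x
    grind
  | succ j ih =>
    obtain ⟨p, hp⟩ := ih (by omega)
    obtain ⟨q, hq⟩ := hg ⟨j, hj⟩ ins (b + j) (b + n) (fun i => by have := hins i; omega)
      (by omega) (fun i => by have := hins i; omega)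
    refine ⟨seq p q, fun σ hσ => ?_⟩
    convert (hp σ hσ).seq (hq _ ?_) using 1
    · have key : ∀ i, ¬ (b ≤ ins i ∧ ins i < b + j) := fun i => by have := hins i; omega
      funext x
      simp only [Function.update_apply, key, dite_false]
      by_cases hx : x = b + j
      · subst hx
        simp [hσ]
      · grind
    · intro x hx
      have := hσ x (by omega)
      grind

lemma able_comp {m n : ℕ} {f : List.Vector ℕ n → ℕ} (g : Fin n → List.Vector ℕ m → ℕ)
    (hf : Able f) (hg : ∀ i, Able (g i)) :
    Able (fun v => f (List.Vector.ofFn fun i => g i v)) := by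
  intro ins o b hins ho hne
  obtain ⟨p, hp⟩ := exists_inner g hg ins b hins n le_rfl
  obtain ⟨q, hq⟩ := hf (fun i => b + i) o (b + n) (by intro i; simp) (by omega)
    (by intro i; omega)
  obtain ⟨r, hr⟩ := exists_clear b n
  refine ⟨seq p (seq q r), fun σ hσ => ?_⟩
  convert (hp σ hσ).seq ((hq _ ?_).seq (hr _)) using 1
  · funext x
    have key : ∀ i : Fin n, b ≤ b + (i : ℕ) ∧ b + (i : ℕ) < b + n := fun i => by omega
    simp only [Function.update_apply, key, dite_true, and_self, Nat.add_sub_cancel_left]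
    have := hσ x
    grind
  · intro x hx
    have := hσ x (by omega)
    grind

/-- The recursion variable runs in counter `b`, the accumulator is `b + 1`, the next accumulator
`b + 2`, and `b + 3` counts the remaining rounds. -/
lemma able_prec {n : ℕ} {f : List.Vector ℕ n → ℕ} {g : List.Vector ℕ (n + 2) → ℕ}
    (hf : Able f) (hg : Able g) :
    Able (fun v : List.Vector ℕ (n + 1) =>
      v.head.rec (f v.tail) fun y IH => g (y ::ᵥ IH ::ᵥ v.tail)) := by
  intro ins o b hins ho hne
  have hins' : ∀ i : Fin n, ins i.succ < b := fun i => hins _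
  obtain ⟨p, hp⟩ := hf (fun i => ins i.succ) (b + 1) (b + 4) (fun i => by have := hins' i; omega)
    (by omega) (fun i => by have := hins' i; omega)
  obtain ⟨q, hq⟩ := hg (Fin.cons b (Fin.cons (b + 1) fun i => ins i.succ)) (b + 2) (b + 4)
    (by
      refine Fin.cases (by simp) (Fin.cases (by simp) fun i => ?_)
      have := hins' i
      simp only [Fin.cons_succ]
      omega)
    (by omega)
    (by
      refine Fin.cases (by simp) (Fin.cases (by simp) fun i => ?_)
      have := hins' i
      simp only [Fin.cons_succ]
      omega)
  refine ⟨seq p (seq (copy (ins 0) (b + 3) (b + 4)) (seq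
    (loop (b + 3) (seq q (seq (loop (b + 1) skip) (seq (loop (b + 2) (inc (b + 1))) (inc b)))))
    (seq (loop (b + 1) (inc o)) (loop b skip)))), fun σ hσ => ?_⟩
  have h0 := hins 0
  have hz : ∀ j, σ (b + j) = 0 := fun j => hσ _ (by omega)
  have hb : σ b = 0 := hz 0
  set w : List.Vector ℕ n := List.Vector.ofFn fun i => σ (ins i.succ) with hw
  obtain ⟨R, hR0, hRs, hR⟩ : ∃ R : ℕ → ℕ, R 0 = f w ∧ (∀ i, R (i + 1) = g (i ::ᵥ R i ::ᵥ w)) ∧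
      ∀ y, Nat.rec (f w) (fun y IH => g (y ::ᵥ IH ::ᵥ w)) y = R y :=
    ⟨fun y => Nat.rec (f w) (fun y IH => g (y ::ᵥ IH ::ᵥ w)) y, rfl, fun _ => rfl, fun _ => rfl⟩
  clear_value w
  have hmain := det_loop (k := b + 3) (m := σ (ins 0))
    (p := seq q (seq (loop (b + 1) skip) (seq (loop (b + 2) (inc (b + 1))) (inc b))))
    (σ := Function.update (Function.update σ (b + 1) (f w)) (b + 3) (σ (ins 0)))
    (fun i => Function.update (Function.update (Function.update σ b i) (b + 1) (R i))
      (b + 3) (σ (ins 0) - i))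
    (by funext x; simp only [Function.update_apply]; grind)
    (by intro i hi; simp)
    (fun i hi => by
      convert (hq _ ?_).seq ((det_clear _ _).seq ((det_move (k := b + 2) (o := b + 1)
        (by omega) _).seq (det_inc _ _))) using 1
      · have hv : (List.Vector.ofFn fun j : Fin (n + 2) =>
            Function.update (Function.update (Function.update (Function.update σ b i) (b + 1) (R i))
              (b + 3) (σ (ins 0) - i)) (b + 3) (σ (ins 0) - i - 1)
              ((Fin.cons b (Fin.cons (b + 1) fun i => ins i.succ) : Fin (n + 2) → ℕ) j)) =
            i ::ᵥ R i ::ᵥ w := by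
          have key : ∀ j : Fin n, ins j.succ ≠ b ∧ ins j.succ ≠ b + 1 ∧ ins j.succ ≠ b + 3 :=
            fun j => by have := hins' j; omega
          ext j
          refine Fin.cases ?_ (Fin.cases ?_ fun j => ?_) j
          · simp [Function.update_apply]
          · simp only [List.Vector.get_ofFn, List.Vector.get_cons_succ, Fin.cons_succ]
            simp
          · simp [hw, Function.update_apply, key]
        rw [hv]
        have h2 := hz 2
        rw [← hRs]
        funext x
        simp only [Function.update_apply]
        grind
      · intro x hx
        have := hσ x (by omega)
        simp only [Function.update_apply]
        grind)
  have hcopy : Det (copy (ins 0) (b + 3) (b + 4))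
      (Function.update σ (b + 1) (σ (b + 1) + f w))
      (Function.update (Function.update σ (b + 1) (f w)) (b + 3) (σ (ins 0))) := by
    have h1 := hz 1
    have h3 := hz 3
    have h4 := hz 4
    convert det_copy (k := ins 0) (o := b + 3) (t := b + 4) (by omega) (by omega) (by omega) ?_
      using 1
    · funext x
      simp only [Function.update_apply]
      grind
    · simp [h4]
  have hp' := hp σ (fun x hx => hσ x (by omega))
  rw [← hw] at hp'
  convert hp'.seq (hcopy.seq (hmain.seq ((det_move (k := b + 1) (o := o) (by omega) _).seq
    (det_clear _ _)))) using 1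
  have hh : (List.Vector.ofFn fun i => σ (ins i)).head = σ (ins 0) := by simp
  have ht : (List.Vector.ofFn fun i => σ (ins i)).tail = w := by simp [hw]
  beta_reduce
  rw [hh, ht, hR]
  funext x
  have h1 := hz 1
  have h3 := hz 3
  simp only [Function.update_apply]
  grind

theorem able_of_primrec {n : ℕ} {f : List.Vector ℕ n → ℕ} (hf : Nat.Primrec' f) : Able f := by
  induction hf with
  | zero => exact able_zero
  | succ => exact able_succ
  | get i => exact able_get i
  | comp g _ _ hf hg => exact able_comp g hf hg
  | prec _ _ hf hg => exact able_prec hf hg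

end Prog

/-! ### Codes -/

lemma listCode_eq_encode (l : List ℕ) : listCode l = Encodable.encode l := by
  induction l with
  | nil => rfl
  | cons a l ih => simp [listCode, ih, Encodable.encode_list_cons]

lemma Instr.code_injective : Function.Injective Instr.code := by
  intro i j h
  cases i <;> cases j <;> simp_all [Instr.code, Nat.pair_eq_pair]

lemma CM.code_injective : Function.Injective CM.code := by
  rintro ⟨K, l⟩ ⟨K', l'⟩ h
  simp only [CM.code, Nat.pair_eq_pair, listCode_eq_encode, Encodable.encode_inj] at h
  rw [h.1, List.map_injective_iff.2 Instr.code_injective h.2]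

/-! ### Hardness -/

namespace Prog

lemma rel_guess (k : ℕ) (σ τ : ℕ → ℕ) :
    (star (inc k)).rel σ τ ↔ ∃ m, τ = Function.update σ k (σ k + m) := by
  constructor
  · intro h
    change Relation.ReflTransGen _ _ _ at h
    induction h with
    | refl => exact ⟨0, by simp⟩
    | tail _ h ih =>
      obtain ⟨m, rfl⟩ := ih
      refine ⟨m + 1, h.trans ?_⟩
      simp [Nat.add_assoc]
  · rintro ⟨m, rfl⟩
    change Relation.ReflTransGen _ _ _
    induction m with
    | zero => simpa using Relation.ReflTransGen.refl
    | succ m ih => exact ih.tail (by simp [rel, Nat.add_assoc])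

/-- Subtracting the constant `n` from counter `0`. -/
def decs : ℕ → Prog
  | 0 => skip
  | n + 1 => seq (dec 0) (decs n)

lemma rel_decs (n : ℕ) (σ τ : ℕ → ℕ) :
    (decs n).rel σ τ ↔ n ≤ σ 0 ∧ τ = Function.update σ 0 (σ 0 - n) := by
  induction n generalizing σ with
  | zero => simp [decs, rel]
  | succ n ih =>
    simp only [decs, rel, ih]
    constructor
    · rintro ⟨ρ, ⟨h, rfl⟩, h', rfl⟩
      simp only [Function.update_self, Function.update_idem] at h' ⊢
      exact ⟨by omega, by rw [Nat.sub_sub, Nat.add_comm 1 n]⟩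
    · rintro ⟨h, rfl⟩
      refine ⟨_, ⟨by omega, rfl⟩, ?_⟩
      simp only [Function.update_self, Function.update_idem]
      exact ⟨by omega, by rw [Nat.sub_sub, Nat.add_comm 1 n]⟩

lemma len_decs (n : ℕ) : (decs n).len = n := by
  induction n with
  | zero => rfl
  | succ n ih => simp [decs, len, ih, Nat.add_comm]

lemma compile_decs (n a : ℕ) : (decs n).compile a = List.replicate n (.dec 2) := by
  induction n generalizing a with
  | zero => rfl
  | succ n ih => simp [decs, compile, ih, List.replicate_succ]

end Prog

/-- The machine that sets its constant counter, runs `q`, and finally makes counter `0` positive. -/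
def machine (K : ℕ) (q : Prog) : CM := ⟨K, .inc 1 :: (q.compile 1 ++ [.inc 0, .halt])⟩

lemma overflows_iff_ov (M : CM) : Overflows M 0 ↔ ∃ n, Ov M n initConfig := by
  constructor
  · rintro ⟨c, h, hc⟩
    unfold Reaches at h
    generalize initConfig = c₀ at h ⊢
    induction h using Relation.ReflTransGen.head_induction_on with
    | refl => exact ⟨0, hc⟩
    | head h _ ih =>
      obtain ⟨n, hn⟩ := ih
      exact ⟨n + 1, _, h, hn⟩
  · rintro ⟨n, h⟩
    unfold Overflows Reaches
    generalize initConfig = c at h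
    induction n generalizing c with
    | zero => exact ⟨c, .refl, h⟩
    | succ n ih =>
      obtain ⟨c', h₁, h₂⟩ := h
      obtain ⟨d, h₃, h₄⟩ := ih c' h₂
      exact ⟨d, .head h₁ h₃, h₄⟩

lemma overflows_machine (K : ℕ) (q : Prog) :
    Overflows (machine K q) 0 ↔ ∃ τ, q.rel (fun _ => 0) τ := by
  have f₀ : Fits (machine K q) 0 (.inc 1 :: (q.compile 1 ++ [.inc 0, .halt])) :=
    fun i x h => by simpa [machine] using h
  obtain ⟨f₀, f⟩ := f₀.cons
  obtain ⟨f₁, f₂⟩ := f.append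
  rw [q.length_compile] at f₂
  replace f₂ := f₂.cons.1
  have hs : ∀ c, Step (machine K q) initConfig c ↔ c = ⟨1, emb fun _ => 0⟩ := by
    intro c
    rw [initConfig, step_inc f₀]
    have : Function.update (fun _ : ℕ => 0) 1 (0 + 1) = emb fun _ => 0 := by
      funext j
      match j with
      | 0 => rfl
      | 1 => rfl
      | j + 2 => simp [emb]
    rw [this]
  constructor
  · rw [overflows_iff_ov]
    rintro ⟨n, h⟩
    match n, h with
    | n + 1, ⟨c, hc, h⟩ =>
      rw [hs] at hc
      subst hc
      obtain ⟨τ, h, -⟩ := rel_of_ov q f₁ h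
      exact ⟨τ, h⟩
  · rintro ⟨τ, h⟩
    exact ⟨_, .head ((hs _).2 rfl) ((reach_of_rel q f₁ h).tail ((step_inc f₂).2 rfl)), by simp⟩

lemma exists_counter_bound (l : List Instr) : ∃ K, ∀ i ∈ l, ∀ k ∈ i.counters, k < K := by
  induction l with
  | nil => exact ⟨0, by simp⟩
  | cons x l ih =>
    obtain ⟨K, hK⟩ := ih
    refine ⟨K + x.counters.sum + 1, fun i hi k hk => ?_⟩
    rcases List.mem_cons.1 hi with rfl | hi
    · have := List.le_sum_of_mem hk
      omega
    · have := hK i hi k hk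
      omega

/-- A Σ⁰₁ set is the projection of a primitive recursive relation. -/
lemma Sigma01.exists_primrec {A : Set ℕ} (hA : Sigma01 A) :
    ∃ g : ℕ → ℕ → ℕ, Primrec₂ g ∧ ∀ n, n ∈ A ↔ ∃ k, 0 < g n k := by
  obtain ⟨f, hf, hA⟩ := hA
  obtain ⟨c, rfl⟩ := Nat.Partrec.Code.exists_code.1 hf
  refine ⟨fun n k => cond (Nat.Partrec.Code.evaln k c n).isSome 1 0, ?_, fun n => ?_⟩
  · refine Primrec.cond (Primrec.option_isSome.comp ?_) (.const 1) (.const 0)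
    exact Nat.Partrec.Code.primrec_evaln.comp
      (.pair (.pair .snd (.const c)) .fst)
  · rw [hA, Part.dom_iff_mem]
    simp only [Nat.Partrec.Code.evaln_complete]
    rw [exists_comm]
    refine exists_congr fun k => ?_
    cases Nat.Partrec.Code.evaln k c n <;> simp

open Prog in
lemma bcset_hard (A : Set ℕ) (hA : Sigma01 A) : ManyOneRed A BCset := by
  obtain ⟨g, hg, hA⟩ := hA.exists_primrec
  obtain ⟨p, hp⟩ := able_of_primrec (Nat.Primrec'.prim_iff₂.2 hg) ![0, 1] 2 3
    (by decide) (by decide) (by decide)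
  replace hp : ∀ σ : ℕ → ℕ, (∀ x, 3 ≤ x → σ x = 0) →
      Det p σ (Function.update σ 2 (σ 2 + g (σ 0) (σ 1))) := by
    intro σ hσ
    simpa using hp σ hσ
  -- Guess `x` and `k`, and check `0 < g x k`; afterwards `x = n` is checked.
  let P : Prog := seq (star (inc 0)) (seq (star (inc 1)) (seq p (dec 2)))
  let Q : ℕ → Prog := fun n => seq P (seq (decs n) (zero 0))
  have hQ : ∀ n, (∃ τ, (Q n).rel (fun _ => 0) τ) ↔ ∃ k, 0 < g n k := by
    intro n
    have hst : ∀ x k : ℕ, Det p (Function.update (Function.update (fun _ => 0) 0 x) 1 k)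
        (Function.update (Function.update (Function.update (fun _ => 0) 0 x) 1 k) 2 (g x k)) := by
      intro x k
      simpa [Function.update_apply] using
        hp (Function.update (Function.update (fun _ => 0) 0 x) 1 k) (fun y hy => by
          rw [Function.update_of_ne (by omega), Function.update_of_ne (by omega)])
    constructor
    · rintro ⟨τ, ρ, ⟨ρ₁, h₁, ρ₂, h₂, ρ₃, h₃, h₄, rfl⟩, ρ₄, h₅, h₆, -⟩
      obtain ⟨x, rfl⟩ := (rel_guess _ _ _).1 h₁
      obtain ⟨k, rfl⟩ := (rel_guess _ _ _).1 h₂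
      simp only [Nat.zero_add, ne_eq, one_ne_zero, not_false_eq_true,
        Function.update_of_ne] at h₃
      rw [hst x k ρ₃] at h₃
      subst h₃
      obtain ⟨h₇, rfl⟩ := (rel_decs _ _ _).1 h₅
      replace h₄ : 0 < g x k := by simpa using h₄
      replace h₇ : n ≤ x := by simpa [Function.update_apply] using h₇
      replace h₆ : x - n = 0 := by simpa [Function.update_apply] using h₆
      obtain rfl : x = n := by omega
      exact ⟨k, h₄⟩
    · rintro ⟨k, hk⟩
      refine ⟨_, _, ⟨_, (rel_guess _ _ _).2 ⟨n, rfl⟩, _, (rel_guess _ _ _).2 ⟨k, rfl⟩,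
        Function.update (Function.update (Function.update (fun _ => 0) 0 n) 1 k) 2 (g n k),
        ?_, ?_, rfl⟩, _, (rel_decs _ _ _).2 ⟨?_, rfl⟩, ?_, rfl⟩
      · simpa using (hst n k _).2 rfl
      · simpa using hk
      · simp
      · simp
  obtain ⟨K, hK⟩ := exists_counter_bound (P.compile 1)
  let M : ℕ → CM := fun n => machine (K + 3) (Q n)
  have hprog : ∀ n, (M n).prog = .inc 1 :: ((P.compile 1 ++ (List.replicate n (.dec 2) ++
      [.branch 2 (1 + P.len + n) (1 + P.len + n)])) ++ [.inc 0, .halt]) := by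
    intro n
    simp [M, Q, machine, compile, compile_decs, len_decs]
  have hwf : ∀ n, (M n).WellFormed := by
    intro n
    constructor
    · intro i hi k hk
      change k < K + 3
      rw [hprog] at hi
      simp only [List.mem_cons, List.mem_append, List.mem_replicate, List.not_mem_nil,
        or_false] at hi
      rcases hi with rfl | (hi | ⟨-, rfl⟩ | rfl) | rfl | rfl
      case inr.inl.inl => have := hK i hi k hk; omega
      all_goals simp [Instr.counters] at hk
      all_goals omega
    · simp [M, machine, List.count_eq_zero_of_not_mem (halt_notMem_compile _ _)]
  refine ⟨fun n => Nat.pair (M n).code 0, ?_, fun n => ?_⟩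
  -- Only the `n` decrements and the address of the zero test depend on `n`.
  · have hcode : ∀ n, (M n).code = Nat.pair (K + 3) (Encodable.encode
        (((Instr.inc 1 :: P.compile 1).map Instr.code ++
          (List.range n).map fun _ => Instr.code (.dec 2)) ++
          Nat.pair 3 (Nat.pair 2 (Nat.pair (1 + P.len + n) (1 + P.len + n))) ::
            [Instr.inc 0, .halt].map Instr.code)) := by
      intro n
      rw [CM.code, hprog, listCode_eq_encode]
      simp [M, machine, Instr.code, List.map_const']
    have : Primrec fun n => Nat.pair (M n).code 0 := by
      simp only [hcode]
      have hadd : Primrec fun n => 1 + P.len + n := Primrec.nat_add.comp (.const _) .id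
      refine Primrec₂.natPair.comp (Primrec₂.natPair.comp (.const _) (Primrec.encode.comp ?_))
        (.const 0)
      refine Primrec.list_append.comp (Primrec.list_append.comp (.const _) ?_) ?_
      · exact Primrec.list_map Primrec.list_range (Primrec.const _).to₂
      · exact Primrec.list_cons.comp (Primrec₂.natPair.comp (.const _)
          (Primrec₂.natPair.comp (.const _) (Primrec₂.natPair.comp hadd hadd))) (.const _)
    exact this.to_comp
  · rw [hA, ← hQ, ← overflows_machine (K + 3)]
    constructor
    · exact fun h => ⟨M n, 0, rfl, hwf n, by simp [M, machine], h⟩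
    · rintro ⟨M', β, h, -, -, h'⟩
      obtain ⟨h₁, rfl⟩ := Nat.pair_eq_pair.1 h
      rwa [← CM.code_injective h₁] at h'

/-! ### Recursive enumerability -/

/-- Writing `v` at position `k` of a counter list, which is padded with zeros as needed. -/
def upd (l : List ℕ) (k v : ℕ) : List ℕ :=
  (List.range (l.length + k + 1)).map fun j => if j = k then v else l.getD j 0

lemma getD_upd (l : List ℕ) (k v j : ℕ) :
    (upd l k v).getD j 0 = Function.update (fun j => l.getD j 0) k v j := by
  rw [Function.update_apply]
  by_cases hj : j < l.length + k + 1
  · simp [upd, hj]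
  · have h₁ : j ≠ k := by omega
    have h₂ : l.length ≤ j := by omega
    simp [upd, hj, h₁, h₂]

/-- One step of a machine with instruction codes `L`, on states made of a location and a list of
counter values; `bit` resolves the nondeterminism, and blocked states are left unchanged. The
default `0` of `getD` is the code of `halt`. -/
def sim (L : List ℕ) (s : ℕ × List ℕ) (bit : ℕ) : ℕ × List ℕ :=
  if (L.getD s.1 0).unpair.1 = 1 then
    (s.1 + 1, upd s.2 (L.getD s.1 0).unpair.2 (s.2.getD (L.getD s.1 0).unpair.2 0 + 1))
  else if (L.getD s.1 0).unpair.1 = 2 then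
    if s.2.getD (L.getD s.1 0).unpair.2 0 = 0 then s
    else (s.1 + 1, upd s.2 (L.getD s.1 0).unpair.2 (s.2.getD (L.getD s.1 0).unpair.2 0 - 1))
  else if (L.getD s.1 0).unpair.1 = 3 then
    if s.2.getD (L.getD s.1 0).unpair.2.unpair.1 0 = 0 then (s.1 + 1, s.2)
    else if bit = 0 then ((L.getD s.1 0).unpair.2.unpair.2.unpair.1, s.2)
    else ((L.getD s.1 0).unpair.2.unpair.2.unpair.2, s.2)
  else s

/-- The configuration represented by a state of the simulation. -/
def toConfig (s : ℕ × List ℕ) : Config := ⟨s.1, fun k => s.2.getD k 0⟩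

lemma toConfig_upd (a : ℕ) (l : List ℕ) (k v : ℕ) :
    toConfig (a, upd l k v) = ⟨a, Function.update (fun j => l.getD j 0) k v⟩ := by
  simp only [toConfig, getD_upd]

lemma sim_spec (M : CM) (s : ℕ × List ℕ) :
    (∀ bit, sim (M.prog.map Instr.code) s bit = s ∨
      Step M (toConfig s) (toConfig (sim (M.prog.map Instr.code) s bit))) ∧
    ∀ c, Step M (toConfig s) c → ∃ bit, toConfig (sim (M.prog.map Instr.code) s bit) = c := by
  have hL : (M.prog.map Instr.code).getD s.1 0 = (M.prog[s.1]?.map Instr.code).getD 0 := by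
    simp [List.getD_eq_getElem?_getD]
  obtain ⟨a, l⟩ := s
  simp only [sim, hL]
  rcases h : M.prog[a]? with _ | i
  · simp [Step, toConfig, h]
  cases i with
  | halt => simp [Step, toConfig, h, Instr.code]
  | inc k =>
    simp [Instr.code, toConfig_upd]
    simp [Step, toConfig, h]
  | dec k =>
    by_cases hk : l.getD k 0 = 0
    · simp only [List.getD_eq_getElem?_getD] at hk
      simp [Step, toConfig, h, Instr.code, hk]
    · simp only [List.getD_eq_getElem?_getD] at hk
      simp [Instr.code, Step, toConfig, h, hk, Nat.pos_of_ne_zero]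
      funext j
      simpa using getD_upd l k (l.getD k 0 - 1) j
  | branch k i j =>
    by_cases hk : l.getD k 0 = 0
    · simp only [List.getD_eq_getElem?_getD] at hk
      simp [Step, toConfig, h, Instr.code, hk]
    · simp only [List.getD_eq_getElem?_getD] at hk
      simp [Step, toConfig, h, Instr.code, hk]
      constructor
      · intro bit
        right
        by_cases hb : bit = 0 <;> simp [hb]
      · exact ⟨⟨0, by simp⟩, 1, by simp⟩

/-- The state reached by following the choices `w`. -/
def simRun (L w : List ℕ) : ℕ × List ℕ := w.foldl (sim L) (0, [])

lemma overflows_iff_sim (M : CM) (β : ℕ) :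
    Overflows M β ↔ ∃ w, β < (simRun (M.prog.map Instr.code) w).2.getD 0 0 := by
  have h0 : toConfig (0, []) = initConfig := by simp [toConfig, initConfig]
  constructor
  · rintro ⟨c, h, hc⟩
    have : ∃ w, toConfig (simRun (M.prog.map Instr.code) w) = c := by
      clear hc
      induction h with
      | refl => exact ⟨[], h0⟩
      | tail _ h ih =>
        obtain ⟨w, rfl⟩ := ih
        obtain ⟨bit, hb⟩ := (sim_spec M _).2 _ h
        exact ⟨w ++ [bit], by simpa [simRun] using hb⟩
    obtain ⟨w, rfl⟩ := this
    exact ⟨w, hc⟩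
  · rintro ⟨w, hw⟩
    refine ⟨toConfig (simRun (M.prog.map Instr.code) w), ?_, hw⟩
    clear hw
    induction w using List.reverseRecOn with
    | nil => rw [Reaches, ← h0]; exact .refl
    | append_singleton w bit ih =>
      have : simRun (M.prog.map Instr.code) (w ++ [bit]) =
          sim (M.prog.map Instr.code) (simRun (M.prog.map Instr.code) w) bit := by
        simp [simRun]
      rw [this]
      rcases (sim_spec M (simRun (M.prog.map Instr.code) w)).1 bit with h | h
      · rwa [h]
      · exact ih.tail h

/-- `c` is the code of an instruction that mentions counters below `K` only. -/
def GoodCode (c K : ℕ) : Prop :=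
  c = 0 ∨ ((c.unpair.1 = 1 ∨ c.unpair.1 = 2) ∧ c.unpair.2 < K) ∨
    (c.unpair.1 = 3 ∧ c.unpair.2.unpair.1 < K)

lemma goodCode_iff (c K : ℕ) :
    GoodCode c K ↔ ∃ i : Instr, i.code = c ∧ ∀ k ∈ i.counters, k < K := by
  constructor
  · rintro (rfl | ⟨h | h, hk⟩ | ⟨h, hk⟩)
    · exact ⟨.halt, rfl, by simp [Instr.counters]⟩
    · exact ⟨.inc c.unpair.2, by simp [Instr.code, ← h], by simpa [Instr.counters] using hk⟩
    · exact ⟨.dec c.unpair.2, by simp [Instr.code, ← h], by simpa [Instr.counters] using hk⟩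
    · exact ⟨.branch c.unpair.2.unpair.1 c.unpair.2.unpair.2.unpair.1
        c.unpair.2.unpair.2.unpair.2, by simp [Instr.code, ← h],
        by simpa [Instr.counters] using hk⟩
  · rintro ⟨i, rfl, h⟩
    cases i <;> simp_all [GoodCode, Instr.code, Instr.counters]
    rfl

/-- The decidable matrix of membership in `BCset`: `n` codes an admissible pair `(M, β)`, and the
choices coded by `w` lead to an overflow. -/
def BCWitness (n w : ℕ) : Prop :=
  2 ≤ n.unpair.1.unpair.1 ∧
  (∀ c ∈ Denumerable.ofNat (List ℕ) n.unpair.1.unpair.2, GoodCode c n.unpair.1.unpair.1) ∧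
  ((Denumerable.ofNat (List ℕ) n.unpair.1.unpair.2).flatMap
    fun c => if c = 0 then [c] else []).length = 1 ∧
  n.unpair.2 < (simRun (Denumerable.ofNat (List ℕ) n.unpair.1.unpair.2)
    (Denumerable.ofNat (List ℕ) w)).2.getD 0 0

lemma mem_bcset_iff (n : ℕ) : n ∈ BCset ↔ ∃ w, BCWitness n w := by
  have hcount : ∀ l : List Instr,
      ((l.map Instr.code).flatMap fun c => if c = 0 then [c] else []).length =
        l.count Instr.halt := by
    intro l
    induction l with
    | nil => rfl
    | cons i l ih =>
      have : i.code = 0 ↔ i = .halt := by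
        rw [← Instr.code_injective.eq_iff]
        rfl
      by_cases h : i = .halt
      · have h' := this.2 h
        simp_all
      · have h' := mt this.1 h
        simp_all
  constructor
  · rintro ⟨M, β, rfl, ⟨h₁, h₂⟩, h₃, h₄⟩
    obtain ⟨w, hw⟩ := (overflows_iff_sim M β).1 h₄
    refine ⟨Encodable.encode w, ?_⟩
    simp only [BCWitness, CM.code, listCode_eq_encode, Nat.unpair_pair, Denumerable.ofNat_encode]
    refine ⟨h₃, fun c hc => ?_, (hcount _).trans h₂, hw⟩
    obtain ⟨i, hi, rfl⟩ := List.mem_map.1 hc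
    exact (goodCode_iff _ _).2 ⟨i, rfl, h₁ i hi⟩
  · rintro ⟨w, h₁, h₂, h₃, h₄⟩
    obtain ⟨l, hl, hl'⟩ : ∃ l : List Instr,
        l.map Instr.code = Denumerable.ofNat (List ℕ) n.unpair.1.unpair.2 ∧
        ∀ i ∈ l, ∀ k ∈ i.counters, k < n.unpair.1.unpair.1 := by
      clear h₃ h₄
      generalize Denumerable.ofNat (List ℕ) n.unpair.1.unpair.2 = L at h₂
      induction L with
      | nil => exact ⟨[], rfl, by simp⟩
      | cons c L ih =>
        obtain ⟨l, rfl, hl⟩ := ih fun c hc => h₂ c (List.mem_cons_of_mem _ hc)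
        obtain ⟨i, rfl, hi⟩ := (goodCode_iff _ _).1 (h₂ c List.mem_cons_self)
        exact ⟨i :: l, rfl, by simpa using ⟨hi, hl⟩⟩
    rw [← hl] at h₃ h₄
    refine ⟨⟨n.unpair.1.unpair.1, l⟩, n.unpair.2, ?_, ⟨hl', (hcount l).symm.trans h₃⟩, h₁,
      (overflows_iff_sim _ _).2 ⟨_, h₄⟩⟩
    simp [CM.code, hl, listCode_eq_encode]

lemma primrec_upd : Primrec fun x : List ℕ × ℕ × ℕ => upd x.1 x.2.1 x.2.2 := by
  refine Primrec.list_map (Primrec.list_range.comp (Primrec.succ.comp (Primrec.nat_add.comp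
    (Primrec.list_length.comp .fst) (Primrec.fst.comp .snd)))) ?_
  refine Primrec.ite (Primrec.eq.comp .snd (Primrec.fst.comp (Primrec.snd.comp .fst)))
    (Primrec.snd.comp (Primrec.snd.comp .fst)) ?_
  exact (Primrec.list_getD 0).comp (Primrec.fst.comp .fst) .snd

lemma primrec_sim :
    Primrec fun x : List ℕ × (ℕ × List ℕ) × ℕ => sim x.1 x.2.1 x.2.2 := by
  have hloc : Primrec fun x : List ℕ × (ℕ × List ℕ) × ℕ => x.2.1.1 :=
    Primrec.fst.comp (Primrec.fst.comp .snd)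
  have hl : Primrec fun x : List ℕ × (ℕ × List ℕ) × ℕ => x.2.1.2 :=
    Primrec.snd.comp (Primrec.fst.comp .snd)
  have hs : Primrec fun x : List ℕ × (ℕ × List ℕ) × ℕ => x.2.1 := Primrec.fst.comp .snd
  have hbit : Primrec fun x : List ℕ × (ℕ × List ℕ) × ℕ => x.2.2 := Primrec.snd.comp .snd
  have hc : Primrec fun x : List ℕ × (ℕ × List ℕ) × ℕ => (x.1.getD x.2.1.1 0).unpair :=
    Primrec.unpair.comp ((Primrec.list_getD 0).comp .fst hloc)
  have htag := Primrec.fst.comp hc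
  have harg := Primrec.snd.comp hc
  have hk := Primrec.fst.comp (Primrec.unpair.comp harg)
  have hij := Primrec.unpair.comp (Primrec.snd.comp (Primrec.unpair.comp harg))
  have hva := (Primrec.list_getD 0).comp hl harg
  have hvk := (Primrec.list_getD 0).comp hl hk
  have hloc' := Primrec.succ.comp hloc
  refine Primrec.ite (Primrec.eq.comp htag (.const 1))
    (hloc'.pair (primrec_upd.comp (hl.pair (harg.pair (Primrec.succ.comp hva))))) ?_
  refine Primrec.ite (Primrec.eq.comp htag (.const 2))
    (Primrec.ite (Primrec.eq.comp hva (.const 0)) hs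
      (hloc'.pair (primrec_upd.comp (hl.pair (harg.pair (Primrec.pred.comp hva)))))) ?_
  exact Primrec.ite (Primrec.eq.comp htag (.const 3))
    (Primrec.ite (Primrec.eq.comp hvk (.const 0)) (hloc'.pair hl)
      (Primrec.ite (Primrec.eq.comp hbit (.const 0)) ((Primrec.fst.comp hij).pair hl)
        ((Primrec.snd.comp hij).pair hl))) hs

lemma primrec_simRun : Primrec₂ simRun :=
  Primrec.list_foldl .snd (.const _)
    (primrec_sim.comp (Primrec.pair (Primrec.fst.comp .fst) .snd)).to₂

lemma primrecRel_goodCode : PrimrecRel GoodCode := by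
  have hu : Primrec fun x : ℕ × ℕ => x.1.unpair := Primrec.unpair.comp .fst
  have ht := Primrec.fst.comp hu
  have ha := Primrec.snd.comp hu
  refine PrimrecPred.or (Primrec.eq.comp .fst (.const 0)) (PrimrecPred.or
    (PrimrecPred.and (PrimrecPred.or (Primrec.eq.comp ht (.const 1))
      (Primrec.eq.comp ht (.const 2))) (Primrec.nat_lt.comp ha .snd))
    (PrimrecPred.and (Primrec.eq.comp ht (.const 3))
      (Primrec.nat_lt.comp (Primrec.fst.comp (Primrec.unpair.comp ha)) .snd)))

lemma primrecRel_bcWitness : PrimrecRel BCWitness := by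
  have hu : Primrec fun x : ℕ × ℕ => x.1.unpair := Primrec.unpair.comp .fst
  have hu' := Primrec.unpair.comp (Primrec.fst.comp hu)
  have hK := Primrec.fst.comp hu'
  have hL := (Primrec.ofNat (List ℕ)).comp (Primrec.snd.comp hu')
  have hw : Primrec fun x : ℕ × ℕ => Denumerable.ofNat (List ℕ) x.2 :=
    (Primrec.ofNat (List ℕ)).comp .snd
  refine PrimrecPred.and (Primrec.nat_le.comp (.const 2) hK) (PrimrecPred.and
    (primrecRel_goodCode.forall_mem_list.comp hL hK) (PrimrecPred.and
      (Primrec.eq.comp (Primrec.list_length.comp (Primrec.list_flatMap hL ?_)) (.const 1))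
      (Primrec.nat_lt.comp (Primrec.snd.comp hu) ((Primrec.list_getD 0).comp
        (Primrec.snd.comp (primrec_simRun.comp hL hw)) (.const 0)))))
  exact Primrec.ite (Primrec.eq.comp .snd (.const 0)) (Primrec.list_cons.comp .snd (.const []))
    (.const [])

lemma bcset_sigma01 : Sigma01 BCset := by
  obtain ⟨inst, h⟩ := primrecRel_bcWitness
  let R : ℕ → ℕ → Bool := fun n w => @decide (BCWitness n w) (inst (n, w))
  refine ⟨fun n => Nat.rfind fun w => Part.some (R n w), ?_, fun n => ?_⟩
  · exact Partrec.nat_iff.1 (Partrec.rfind (Computable.partrec h.to_comp))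
  · refine (mem_bcset_iff n).trans (Iff.trans ?_ Nat.rfind_dom.symm)
    simp [R]

/-- **Theorem 1, first part.** The bounded counter problem is Σ⁰₁-complete. -/
theorem stmt6 : Sigma01 BCset ∧ ∀ A : Set ℕ, Sigma01 A → ManyOneRed A BCset := by
  exact ⟨bcset_sigma01, bcset_hard⟩
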